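/- Let U ⊆ ℝ³ be an open set and φ : U → ℂ a smooth map. Then φ is a generalized harmonic morphism (for every open V ⊆ ℂ ≅ ℝ² and every harmonic f : V → ℝ, the function f ∘ φ is biharmonic on φ^{-1}(V)) if and only if φ is horizontally weakly conformal (Σ_{i=1}^{3} (∂φ/∂x_i)² = 0 on U) and both φ and φ² are biharmonic as maps into ℂ. -/

import Mathlib

open scoped BigOperators RealInnerProductSpace

noncomputable section

/-- `m`-dimensional Euclidean space. -/
abbrev E (m : ℕ) := EuclideanSpace ℝ (Fin m)

/-- The Euclidean Laplacian of a real-valued function: the sum of the second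
partial derivatives in the coordinate directions. -/
noncomputable def lap {m : ℕ} (f : E m → ℝ) (x : E m) : ℝ :=
  ∑ i : Fin m,
    fderiv ℝ (fun y => fderiv ℝ f y (EuclideanSpace.single i 1)) x (EuclideanSpace.single i 1)

/-- The Euclidean Laplacian of a complex-valued function (applied componentwise). -/
noncomputable def lapC {m : ℕ} (f : E m → ℂ) (x : E m) : ℂ :=
  ∑ i : Fin m,
    fderiv ℝ (fun y => fderiv ℝ f y (EuclideanSpace.single i 1)) x (EuclideanSpace.single i 1)

/-- A (smooth) harmonic function on a set: `Δ f = 0` there. -/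
def HarmonicOn {m : ℕ} (f : E m → ℝ) (s : Set (E m)) : Prop :=
  ContDiffOn ℝ (⊤ : ℕ∞) f s ∧ ∀ x ∈ s, lap f x = 0

/-- A (smooth) biharmonic function on a set: `Δ (Δ f) = 0` there. -/
def BiharmonicOn {m : ℕ} (f : E m → ℝ) (s : Set (E m)) : Prop :=
  ContDiffOn ℝ (⊤ : ℕ∞) f s ∧ ∀ x ∈ s, lap (lap f) x = 0

/-- A generalized harmonic morphism on `U`: it pulls back every harmonic function on an
open set `V` of the target to a biharmonic function on `U ∩ φ ⁻¹' V`. -/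
def IsGHM {m n : ℕ} (φ : E m → E n) (U : Set (E m)) : Prop :=
  ∀ V : Set (E n), IsOpen V → ∀ f : E n → ℝ, HarmonicOn f V →
    BiharmonicOn (f ∘ φ) (U ∩ φ ⁻¹' V)

/-- A harmonic morphism on `U`: it pulls back harmonic functions to harmonic functions. -/
def IsHM {m n : ℕ} (φ : E m → E n) (U : Set (E m)) : Prop :=
  ∀ V : Set (E n), IsOpen V → ∀ f : E n → ℝ, HarmonicOn f V →
    HarmonicOn (f ∘ φ) (U ∩ φ ⁻¹' V)

/-- A biharmonic morphism on `U`: it pulls back biharmonic functions to biharmonic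
functions. -/
def IsBHM {m n : ℕ} (φ : E m → E n) (U : Set (E m)) : Prop :=
  ∀ V : Set (E n), IsOpen V → ∀ f : E n → ℝ, BiharmonicOn f V →
    BiharmonicOn (f ∘ φ) (U ∩ φ ⁻¹' V)

/-- Horizontally weakly conformal on `U`: there is `λ : U → [0,∞)` with
`⟪∇φ^α, ∇φ^β⟫ = λ² δ_{αβ}` pointwise on `U`. -/
def IsHWC {m n : ℕ} (φ : E m → E n) (U : Set (E m)) : Prop :=
  ∃ lam : E m → ℝ, (∀ x, 0 ≤ lam x) ∧
    ∀ x ∈ U, ∀ α β : Fin n,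
      ⟪gradient (fun y => φ y α) x, gradient (fun y => φ y β) x⟫ =
        (lam x) ^ 2 * (if α = β then 1 else 0)

/-- The Euclidean Laplacian of a real-valued function on `ℂ ≅ ℝ²`. -/
noncomputable def lapPlane (f : ℂ → ℝ) (z : ℂ) : ℝ :=
  fderiv ℝ (fun w => fderiv ℝ f w 1) z 1 +
    fderiv ℝ (fun w => fderiv ℝ f w Complex.I) z Complex.I

open Set Filter Topology

/-- directional derivative along the `i`-th coordinate -/
def Dd (i : Fin 3) (f : E 3 → ℂ) (x : E 3) : ℂ := fderiv ℝ f x (EuclideanSpace.single i 1)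

/-- sum of squares of the partial derivatives -/
def gg (f : E 3 → ℂ) (x : E 3) : ℂ := ∑ i : Fin 3, (Dd i f x) ^ 2

/-- scalar product of gradients -/
def cross (f g : E 3 → ℂ) (x : E 3) : ℂ := ∑ i : Fin 3, Dd i f x * Dd i g x

lemma lapC_eq (f : E 3 → ℂ) (x : E 3) : lapC f x = ∑ i : Fin 3, Dd i (Dd i f) x := rfl

lemma Dd_smooth {W : Set (E 3)} (hW : IsOpen W) {f : E 3 → ℂ}
    (hf : ContDiffOn ℝ (⊤ : ℕ∞) f W) (i : Fin 3) : ContDiffOn ℝ (⊤ : ℕ∞) (Dd i f) W :=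
  (hf.fderiv_of_isOpen hW (m := (⊤ : ℕ∞)) (by simp)).clm_apply contDiffOn_const

lemma diffAt {W : Set (E 3)} (hW : IsOpen W) {f : E 3 → ℂ}
    (hf : ContDiffOn ℝ (⊤ : ℕ∞) f W) {x : E 3} (hx : x ∈ W) : DifferentiableAt ℝ f x :=
  (hf.contDiffAt (hW.mem_nhds hx)).differentiableAt (by simp)

lemma lapC_smooth {W : Set (E 3)} (hW : IsOpen W) {f : E 3 → ℂ}
    (hf : ContDiffOn ℝ (⊤ : ℕ∞) f W) : ContDiffOn ℝ (⊤ : ℕ∞) (lapC f) W := by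
  have : lapC f = fun x => ∑ i : Fin 3, Dd i (Dd i f) x := rfl
  rw [this]
  exact ContDiffOn.sum fun i _ => Dd_smooth hW (Dd_smooth hW hf i) i

lemma gg_smooth {W : Set (E 3)} (hW : IsOpen W) {f : E 3 → ℂ}
    (hf : ContDiffOn ℝ (⊤ : ℕ∞) f W) : ContDiffOn ℝ (⊤ : ℕ∞) (gg f) W := by
  exact ContDiffOn.sum fun i _ => (Dd_smooth hW hf i).pow 2

lemma Dd_congr {W : Set (E 3)} (hW : IsOpen W) {f g : E 3 → ℂ} (h : EqOn f g W) (i : Fin 3) :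
    EqOn (Dd i f) (Dd i g) W := by
  intro x hx
  have : f =ᶠ[𝓝 x] g := h.eventuallyEq_of_mem (hW.mem_nhds hx)
  simp only [Dd, this.fderiv_eq]

lemma lapC_congr {W : Set (E 3)} (hW : IsOpen W) {f g : E 3 → ℂ} (h : EqOn f g W) :
    EqOn (lapC f) (lapC g) W := by
  intro x hx
  simp only [lapC_eq]
  exact Finset.sum_congr rfl fun i _ => Dd_congr hW (Dd_congr hW h i) i hx

lemma Dd_add {f g : E 3 → ℂ} {x : E 3} (hf : DifferentiableAt ℝ f x)
    (hg : DifferentiableAt ℝ g x) (i : Fin 3) :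
    Dd i (fun y => f y + g y) x = Dd i f x + Dd i g x := by
  simp only [Dd]
  rw [fderiv_fun_add hf hg]; rfl

lemma Dd_mul {f g : E 3 → ℂ} {x : E 3} (hf : DifferentiableAt ℝ f x)
    (hg : DifferentiableAt ℝ g x) (i : Fin 3) :
    Dd i (fun y => f y * g y) x = Dd i f x * g x + f x * Dd i g x := by
  simp only [Dd]
  rw [fderiv_fun_mul hf hg]
  simp; ring

lemma Dd_comp {F : ℂ → ℂ} {φ : E 3 → ℂ} {x : E 3} (hF : DifferentiableAt ℂ F (φ x))
    (hφ : DifferentiableAt ℝ φ x) (i : Fin 3) :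
    Dd i (fun y => F (φ y)) x = deriv F (φ x) * Dd i φ x := by
  have := (hF.hasDerivAt.comp_hasFDerivAt x hφ.hasFDerivAt).fderiv
  simp only [Dd]
  change fderiv ℝ (F ∘ φ) x _ = _
  rw [this]; simp

lemma lapC_add {W : Set (E 3)} (hW : IsOpen W) {f g : E 3 → ℂ}
    (hf : ContDiffOn ℝ (⊤ : ℕ∞) f W) (hg : ContDiffOn ℝ (⊤ : ℕ∞) g W) {x : E 3} (hx : x ∈ W) :
    lapC (fun y => f y + g y) x = lapC f x + lapC g x := by
  simp only [lapC_eq, ← Finset.sum_add_distrib]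
  refine Finset.sum_congr rfl fun i _ => ?_
  rw [← Dd_add (diffAt hW (Dd_smooth hW hf i) hx) (diffAt hW (Dd_smooth hW hg i) hx)]
  exact Dd_congr hW (fun y hy => Dd_add (diffAt hW hf hy) (diffAt hW hg hy) i) i hx

lemma lapC_mul {W : Set (E 3)} (hW : IsOpen W) {f g : E 3 → ℂ}
    (hf : ContDiffOn ℝ (⊤ : ℕ∞) f W) (hg : ContDiffOn ℝ (⊤ : ℕ∞) g W) {x : E 3} (hx : x ∈ W) :
    lapC (fun y => f y * g y) x = lapC f x * g x + 2 * cross f g x + f x * lapC g x := by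
  simp only [lapC_eq, cross, Finset.mul_sum, Finset.sum_mul, ← Finset.sum_add_distrib]
  refine Finset.sum_congr rfl fun i _ => ?_
  have hf' := Dd_smooth hW hf i
  have hg' := Dd_smooth hW hg i
  have h1 : Dd i (Dd i fun y => f y * g y) x
      = Dd i (fun y => Dd i f y * g y + f y * Dd i g y) x :=
    Dd_congr hW (fun y hy => Dd_mul (diffAt hW hf hy) (diffAt hW hg hy) i) i hx
  rw [h1, Dd_add (diffAt hW (hf'.mul hg) hx) (diffAt hW (hf.mul hg') hx),
    Dd_mul (diffAt hW hf' hx) (diffAt hW hg hx), Dd_mul (diffAt hW hf hx) (diffAt hW hg' hx)]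
  ring

lemma comp_smooth {W : Set (E 3)} {V : Set ℂ} (hV : IsOpen V)
    {F : ℂ → ℂ} (hF : DifferentiableOn ℂ F V) {φ : E 3 → ℂ}
    (hφ : ContDiffOn ℝ (⊤ : ℕ∞) φ W) (hm : ∀ y ∈ W, φ y ∈ V) :
    ContDiffOn ℝ (⊤ : ℕ∞) (fun y => F (φ y)) W :=
  ((hF.contDiffOn hV (n := (⊤ : ℕ∞))).restrict_scalars ℝ).comp hφ hm

lemma cross_comp {W : Set (E 3)} (hW : IsOpen W) {V : Set ℂ} (hV : IsOpen V)
    {F : ℂ → ℂ} (hF : DifferentiableOn ℂ F V) {φ : E 3 → ℂ}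
    (hφ : ContDiffOn ℝ (⊤ : ℕ∞) φ W) (hm : ∀ y ∈ W, φ y ∈ V) (h : E 3 → ℂ)
    {x : E 3} (hx : x ∈ W) :
    cross (fun y => F (φ y)) h x = deriv F (φ x) * cross φ h x := by
  simp only [cross, Finset.mul_sum]
  refine Finset.sum_congr rfl fun i _ => ?_
  rw [Dd_comp (hF.differentiableAt (hV.mem_nhds (hm x hx))) (diffAt hW hφ hx)]
  ring

lemma lapC_comp {W : Set (E 3)} (hW : IsOpen W) {V : Set ℂ} (hV : IsOpen V)
    {F : ℂ → ℂ} (hF : DifferentiableOn ℂ F V) {φ : E 3 → ℂ}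
    (hφ : ContDiffOn ℝ (⊤ : ℕ∞) φ W) (hm : ∀ y ∈ W, φ y ∈ V) {x : E 3} (hx : x ∈ W) :
    lapC (fun y => F (φ y)) x
      = deriv (deriv F) (φ x) * gg φ x + deriv F (φ x) * lapC φ x := by
  simp only [lapC_eq, gg, Finset.mul_sum, ← Finset.sum_add_distrib]
  refine Finset.sum_congr rfl fun i _ => ?_
  have hF' := hF.deriv hV
  have h1 : Dd i (Dd i fun y => F (φ y)) x = Dd i (fun y => deriv F (φ y) * Dd i φ y) x :=
    Dd_congr hW (fun y hy =>
      Dd_comp (hF.differentiableAt (hV.mem_nhds (hm y hy))) (diffAt hW hφ hy) i) i hx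
  rw [h1, Dd_mul (diffAt hW (comp_smooth hV hF' hφ hm) hx) (diffAt hW (Dd_smooth hW hφ i) hx),
    Dd_comp (hF'.differentiableAt (hV.mem_nhds (hm x hx))) (diffAt hW hφ hx)]
  ring

lemma bilap_comp {W : Set (E 3)} (hW : IsOpen W) {V : Set ℂ} (hV : IsOpen V)
    {F : ℂ → ℂ} (hF : DifferentiableOn ℂ F V) {φ : E 3 → ℂ}
    (hφ : ContDiffOn ℝ (⊤ : ℕ∞) φ W) (hm : ∀ y ∈ W, φ y ∈ V) {x : E 3} (hx : x ∈ W) :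
    lapC (lapC (fun y => F (φ y))) x
      = deriv F (φ x) * lapC (lapC φ) x
        + deriv (deriv F) (φ x) *
            (2 * cross φ (lapC φ) x + (lapC φ x) ^ 2 + lapC (gg φ) x)
        + deriv (deriv (deriv F)) (φ x) * (2 * gg φ x * lapC φ x + 2 * cross φ (gg φ) x)
        + deriv (deriv (deriv (deriv F))) (φ x) * (gg φ x) ^ 2 := by
  have hF1 := hF.deriv hV
  have hF2 := hF1.deriv hV
  have hg := gg_smooth hW hφ
  have ht := lapC_smooth hW hφ
  have s1 := comp_smooth hV hF1 hφ hm
  have s2 := comp_smooth hV hF2 hφ hm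
  rw [lapC_congr hW (fun y hy => lapC_comp hW hV hF hφ hm hy) hx,
    lapC_add hW (s2.mul hg) (s1.mul ht) hx, lapC_mul hW s2 hg hx, lapC_mul hW s1 ht hx,
    cross_comp hW hV hF1 hφ hm _ hx, cross_comp hW hV hF2 hφ hm _ hx,
    lapC_comp hW hV hF1 hφ hm hx, lapC_comp hW hV hF2 hφ hm hx]
  ring

lemma fderiv_re {h : E 3 → ℂ} {x : E 3} (hh : DifferentiableAt ℝ h x) (v : E 3) :
    fderiv ℝ (fun y => (h y).re) x v = (fderiv ℝ h x v).re := by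
  have := (Complex.reCLM.hasFDerivAt.comp x hh.hasFDerivAt).fderiv
  change fderiv ℝ (Complex.reCLM ∘ h) x v = _
  rw [this]; rfl

lemma lap_congr {W : Set (E 3)} (hW : IsOpen W) {f g : E 3 → ℝ} (h : EqOn f g W) :
    EqOn (lap f) (lap g) W := by
  have key : ∀ {f g : E 3 → ℝ}, EqOn f g W → ∀ v : E 3,
      EqOn (fun y => fderiv ℝ f y v) (fun y => fderiv ℝ g y v) W := by
    intro f g h v x hx
    have : f =ᶠ[𝓝 x] g := h.eventuallyEq_of_mem (hW.mem_nhds hx)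
    simp only [this.fderiv_eq]
  intro x hx
  exact Finset.sum_congr rfl fun i _ => key (key h _) _ hx

lemma lap_re {W : Set (E 3)} (hW : IsOpen W) {h : E 3 → ℂ}
    (hh : ContDiffOn ℝ (⊤ : ℕ∞) h W) : EqOn (lap (fun y => (h y).re)) (fun y => (lapC h y).re) W := by
  intro x hx
  simp only [lap, lapC_eq, Complex.re_sum]
  refine Finset.sum_congr rfl fun i _ => ?_
  have e : (fun y => fderiv ℝ (fun y => (h y).re) y (EuclideanSpace.single i 1))
      =ᶠ[𝓝 x] fun y => (Dd i h y).re := by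
    filter_upwards [hW.mem_nhds hx] with y hy
    exact fderiv_re (diffAt hW hh hy) _
  rw [e.fderiv_eq, fderiv_re (diffAt hW (Dd_smooth hW hh i) hx)]
  rfl

lemma lap_lap_re {W : Set (E 3)} (hW : IsOpen W) {h : E 3 → ℂ}
    (hh : ContDiffOn ℝ (⊤ : ℕ∞) h W) {x : E 3} (hx : x ∈ W) :
    lap (lap (fun y => (h y).re)) x = (lapC (lapC h) x).re := by
  rw [lap_congr hW (lap_re hW hh) hx, lap_re hW (lapC_smooth hW hh) hx]

lemma fderiv_re_plane {F : ℂ → ℂ} {z : ℂ} (hF : DifferentiableAt ℂ F z) (v : ℂ) :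
    fderiv ℝ (fun w => (F w).re) z v = (deriv F z * v).re := by
  have := (Complex.reCLM.hasFDerivAt.comp z hF.hasDerivAt.complexToReal_fderiv).fderiv
  change fderiv ℝ (Complex.reCLM ∘ F) z v = _
  rw [this]; simp

lemma lapPlane_re {F : ℂ → ℂ} (hF : Differentiable ℂ F) (z : ℂ) :
    lapPlane (fun w => (F w).re) z = 0 := by
  have hF' : Differentiable ℂ (deriv F) := hF.contDiff.differentiable_deriv_two
  simp only [lapPlane]
  simp_rw [fun w v => fderiv_re_plane (hF w) v]
  rw [fderiv_re_plane (F := fun w => deriv F w * 1) (by fun_prop),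
    fderiv_re_plane (F := fun w => deriv F w * Complex.I) (by fun_prop)]
  rw [deriv_mul_const (hF' z), deriv_mul_const (hF' z)]
  simp

lemma two_le_smooth : (2 : WithTop ℕ∞) ≤ ((⊤ : ℕ∞) : WithTop ℕ∞) :=
  WithTop.coe_le_coe.2 (le_top : (2 : ℕ∞) ≤ ⊤)

lemma harmonic_plane {V : Set ℂ} (hV : IsOpen V) {f : ℂ → ℝ}
    (hf : ContDiffOn ℝ (⊤ : ℕ∞) f V) (h0 : ∀ z ∈ V, lapPlane f z = 0) :
    InnerProductSpace.HarmonicOnNhd f V := by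
  intro z hz
  have hc : ∀ w ∈ V, ContDiffAt ℝ (⊤ : ℕ∞) f w := fun w hw => hf.contDiffAt (hV.mem_nhds hw)
  refine ⟨(hc z hz).of_le two_le_smooth, ?_⟩
  filter_upwards [hV.mem_nhds hz] with w hw
  have h1 := h0 w hw
  have hd : DifferentiableAt ℝ (fderiv ℝ f) w :=
    ((hc w hw).fderiv_right (m := 1) (by rw [one_add_one_eq_two]; exact two_le_smooth)).differentiableAt (by simp)
  rw [InnerProductSpace.laplacian_eq_iteratedFDeriv_complexPlane]
  simp only [iteratedFDeriv_two_apply, lapPlane] at h1 ⊢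
  rw [fderiv_clm_apply hd (by fun_prop), fderiv_clm_apply hd (by fun_prop)] at h1
  simpa using h1

/-- the forward direction, for entire functions -/
lemma forward_entire (U : Set (E 3)) (hU : IsOpen U)
    (φ : E 3 → ℂ) (hφ : ContDiffOn ℝ (⊤ : ℕ∞) φ U)
    (H : ∀ V : Set ℂ, IsOpen V → ∀ f : ℂ → ℝ,
        (ContDiffOn ℝ (⊤ : ℕ∞) f V ∧ ∀ z ∈ V, lapPlane f z = 0) →
        ∀ x ∈ U ∩ φ ⁻¹' V, lap (lap (fun y => f (φ y))) x = 0)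
    {F : ℂ → ℂ} (hF : Differentiable ℂ F) {x : E 3} (hx : x ∈ U) :
    lapC (lapC (fun y => F (φ y))) x = 0 := by
  have key : ∀ G : ℂ → ℂ, Differentiable ℂ G → (lapC (lapC (fun y => G (φ y))) x).re = 0 := by
    intro G hG
    rw [← lap_lap_re hU (comp_smooth isOpen_univ hG.differentiableOn hφ (by simp)) hx]
    refine H univ isOpen_univ (fun z => (G z).re) ⟨?_, fun z _ => lapPlane_re hG z⟩ x
      ⟨hx, mem_univ _⟩
    exact (Complex.reCLM.contDiff.comp ((hG.contDiff (n := (⊤ : ℕ∞))).restrict_scalars ℝ)).contDiffOn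
  have h1 := key F hF
  have h2 := key (fun z => Complex.I * F z) (by fun_prop)
  have hcI : ∀ h : E 3 → ℂ, ContDiffOn ℝ (⊤ : ℕ∞) h U →
      EqOn (lapC (fun y => Complex.I * h y)) (fun y => Complex.I * lapC h y) U := by
    intro h hh y hy
    have := lapC_comp hU isOpen_univ (F := fun z => Complex.I * z)
      (by fun_prop) hh (by simp) hy
    rw [this]
    have hd : deriv (fun z : ℂ => Complex.I * z) = fun _ => Complex.I := by
      funext z; simp
    rw [hd]; simp
  have hs := comp_smooth isOpen_univ hF.differentiableOn hφ (by simp)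
  rw [lapC_congr hU (hcI _ hs) hx, hcI _ (lapC_smooth hU hs) hx] at h2
  simp at h2
  exact Complex.ext h1 h2

/-- a smooth map `φ : U → ℂ` on an open `U ⊆ ℝ³` is a generalized
harmonic morphism (it pulls back every harmonic function on an open `V ⊆ ℂ ≅ ℝ²` to a
biharmonic function on `φ⁻¹(V)`) if and only if it is horizontally weakly conformal
(`Σᵢ (∂φ/∂xᵢ)² = 0` on `U`) and both `φ` and `φ²` are biharmonic. -/
theorem stmt_8 (U : Set (E 3)) (hU : IsOpen U)
    (φ : E 3 → ℂ) (hφ : ContDiffOn ℝ (⊤ : ℕ∞) φ U) :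
    (∀ V : Set ℂ, IsOpen V → ∀ f : ℂ → ℝ,
        (ContDiffOn ℝ (⊤ : ℕ∞) f V ∧ ∀ z ∈ V, lapPlane f z = 0) →
        ∀ x ∈ U ∩ φ ⁻¹' V, lap (lap (fun y => f (φ y))) x = 0) ↔
      ((∀ x ∈ U, ∑ i : Fin 3, (fderiv ℝ φ x (EuclideanSpace.single i 1)) ^ 2 = 0) ∧
        (∀ x ∈ U, lapC (lapC φ) x = 0) ∧
        (∀ x ∈ U, lapC (lapC (fun y => (φ y) ^ 2)) x = 0)) := by
  constructor
  · intro H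
    have K := fun {F : ℂ → ℂ} (hF : Differentiable ℂ F) {x : E 3} (hx : x ∈ U) =>
      forward_entire U hU φ hφ H hF hx
    refine ⟨fun x hx => ?_, fun x hx => K (F := fun z => z) differentiable_fun_id hx,
      fun x hx => K (F := fun z => z ^ 2) (by fun_prop) hx⟩
    have hd : ∀ (c : ℂ) (n : ℕ), deriv (fun z : ℂ => c * (z - φ x) ^ n)
        = fun z => (c * n) * (z - φ x) ^ (n - 1) := by
      intro c n
      funext z
      have h1 := (((hasDerivAt_id z).sub_const (φ x)).pow n).const_mul c
      have h2 := h1.deriv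
      simp only [id] at h2
      refine Eq.trans h2 ?_
      ring
    have hF : Differentiable ℂ (fun z : ℂ => 1 * (z - φ x) ^ 4) := by fun_prop
    have h := K hF hx
    rw [bilap_comp hU isOpen_univ hF.differentiableOn hφ (by simp) hx] at h
    simp only [hd] at h
    norm_num at h
    exact h
  · rintro ⟨hg, hb, hb2⟩ V hV f ⟨hf, hf0⟩ x ⟨hxU, hxV⟩
    have hharm := harmonic_plane hV hf hf0
    obtain ⟨R, hR, hball⟩ := Metric.isOpen_iff.1 hV (φ x) hxV
    obtain ⟨F, hF, hFe⟩ := InnerProductSpace.HarmonicOnNhd.exists_analyticOnNhd_ball_re_eq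
      (hharm.mono hball)
    have hFd : DifferentiableOn ℂ F (Metric.ball (φ x) R) := hF.differentiableOn
    set W : Set (E 3) := U ∩ φ ⁻¹' (Metric.ball (φ x) R) with hWdef
    have hW : IsOpen W := hφ.continuousOn.isOpen_inter_preimage hU Metric.isOpen_ball
    have hxW : x ∈ W := ⟨hxU, Metric.mem_ball_self hR⟩
    have hφW : ContDiffOn ℝ (⊤ : ℕ∞) φ W := hφ.mono inter_subset_left
    have hm : ∀ y ∈ W, φ y ∈ Metric.ball (φ x) R := fun y hy => hy.2
    have e : EqOn (fun y => f (φ y)) (fun y => (F (φ y)).re) W :=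
      fun y hy => (hFe (hm y hy)).symm
    rw [lap_congr hW (lap_congr hW e) hxW,
      lap_lap_re hW (comp_smooth Metric.isOpen_ball hFd hφW hm) hxW,
      bilap_comp hW Metric.isOpen_ball hFd hφW hm hxW]
    have g0 : EqOn (gg φ) (fun _ => 0) U := fun y hy => hg y hy
    have gx : gg φ x = 0 := g0 hxU
    have hD0 : ∀ i, EqOn (Dd i (gg φ)) (fun _ => 0) U := by
      intro i y hy
      rw [Dd_congr hU g0 i hy]
      simp [Dd]
    have c0 : cross φ (gg φ) x = 0 := by
      simp [cross, fun i => hD0 i hxU]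
    have h2 := hb2 x hxU
    have hsq : Differentiable ℂ (fun z : ℂ => z ^ 2) := by fun_prop
    have h3 := bilap_comp hU isOpen_univ hsq.differentiableOn hφ (by simp) hxU
    have hd1 : deriv (fun z : ℂ => z ^ 2) = fun z => 2 * z := by
      funext z; simp
    have hd2 : deriv (fun z : ℂ => 2 * z) = fun _ => 2 := by
      funext z; simp
    rw [h2, hb x hxU, gx, c0, hd1, hd2] at h3
    have h4 : 2 * cross φ (lapC φ) x + (lapC φ x) ^ 2 + lapC (gg φ) x = 0 := by
      have : (2 : ℂ) * (2 * cross φ (lapC φ) x + (lapC φ x) ^ 2 + lapC (gg φ) x) = 0 := by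
        rw [h3]; ring
      simpa using this
    rw [hb x hxU, gx, c0, h4]
    simp
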